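/- Let A_i ∈ ℝ^{m×d_i} and C_i ∈ ℝ^{p_i×d_i} for i = 1,…,n, with 𝐀 = diag(A₁,…,Aₙ), 𝐂 = diag(C₁,…,Cₙ), 𝐀' = (A₁ ⋯ Aₙ), and let W ∈ ℝ^{n×n} be a gossip matrix with 𝐖 = W ⊗ I_m. Suppose μ̃ = (1/n)σ_min+²(𝐀' P_{ker 𝐂}) > 0, where P_{ker 𝐂} is the orthogonal projector onto ker 𝐂. Set L_A = max_i σ_max²(A_i), L_S = (1/n)σ_max²(𝐀'), μ_W = λ_min+(W)², L_W = λ_max(W)², μ_C = σ_min+²(𝐂), L_C = σ_max²(𝐂), κ_W = L_W/μ_W, κ_C = L_C/μ_C, and choose α² = (L_A + μ̃/4)/μ_W, β² = (L_S + μ̃/2)/μ_C. Then the block matrix B = [[𝐀, α𝐖], [β𝐂, 0]] satisfies κ_B = σ_max²(B)/σ_min+²(B) ≤ 4L_A/μ̃ + ((4L_A + μ̃)/μ̃)·κ_W + ((4L_S + 2μ̃)/μ̃)·κ_C. -/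

import Mathlib

/-!
The condition number is bounded by `σ_max²(B) ≤ L_A + α² L_W + β² L_C` and
`σ_min+²(B) ≥ μ̃/4`; with the prescribed `α`, `β` the quotient of the two is exactly the claimed
right-hand side. The upper bound is a direct estimate of `‖𝐀x + α𝐖y‖² + β²‖𝐂x‖²`.

The lower bound is obtained by passing to transposes twice (`lower_bound_of_transpose`: `M` and
`Mᵀ` have the same positive singular values).

* For `S = (𝐀'/√n ; β𝐂)`, split `x = Px + (x - Px)`. The size of `β` makes the rows `β𝐂` dominate
  both `x - Px` and its image under `𝐀'/√n`, leaving `σ_min+²(S) ≥ μ̃/2` (`stacked_lower_bound`).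
* For `Bᵀ(u, v) = (𝐀ᵀu + β𝐂ᵀv, α𝐖u)`, split `u` into its consensus part and the orthogonal rest.
  The consensus part is `(t, …, t)/√n` with norm `‖t‖`, and `𝐀ᵀ` maps it to `𝐀'ᵀt/√n`, so there
  the operator is `Sᵀ`; the size of `α` makes `α𝐖` dominate the rest and its image under `𝐀ᵀ`.
  This leaves `σ_min+²(Bᵀ) ≥ μ̃/4` (`coupled_transpose_lower_bound`). The same isometry embeds
  `ker Sᵀ` into `ker Bᵀ`, so `(u, v) ⟂ ker Bᵀ` implies `(t, v) ⟂ ker Sᵀ`.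

Both steps use `‖a + b‖² ≥ ‖a‖²/2 - ‖b‖²`, whence the two factors of one half.
-/

open Matrix
open scoped BigOperators

noncomputable section

/-- Squared Euclidean norm of a vector. -/
def sqnorm {ι : Type*} [Fintype ι] (v : ι → ℝ) : ℝ := ∑ i, (v i) ^ 2

/-- Squared largest singular value of a real matrix. -/
def sigmaMaxSq {ι κ : Type*} [Fintype ι] [Fintype κ] (M : Matrix ι κ ℝ) : ℝ :=
  sSup {r : ℝ | ∃ x : κ → ℝ, sqnorm x = 1 ∧ r = sqnorm (M.mulVec x)}

/-- Squared smallest positive singular value of a real matrix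
(infimum of `‖Mx‖²` over unit vectors orthogonal to `ker M`). -/
def sigmaMinPosSq {ι κ : Type*} [Fintype ι] [Fintype κ] (M : Matrix ι κ ℝ) : ℝ :=
  sInf {r : ℝ | ∃ x : κ → ℝ,
    (∀ y : κ → ℝ, M.mulVec y = 0 → x ⬝ᵥ y = 0) ∧ sqnorm x = 1 ∧ r = sqnorm (M.mulVec x)}

/-- Largest eigenvalue of a symmetric real matrix (Rayleigh quotient form). -/
def lamMax {ι : Type*} [Fintype ι] (M : Matrix ι ι ℝ) : ℝ :=
  sSup {r : ℝ | ∃ x : ι → ℝ, sqnorm x = 1 ∧ r = x ⬝ᵥ M.mulVec x}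

/-- Smallest positive eigenvalue of a symmetric PSD real matrix (Rayleigh quotient
over unit vectors orthogonal to the kernel). -/
def lamMinPos {ι : Type*} [Fintype ι] (M : Matrix ι ι ℝ) : ℝ :=
  sInf {r : ℝ | ∃ x : ι → ℝ,
    (∀ y : ι → ℝ, M.mulVec y = 0 → x ⬝ᵥ y = 0) ∧ sqnorm x = 1 ∧ r = x ⬝ᵥ M.mulVec x}

/-- Block-diagonal matrix `diag(A₁,…,Aₙ)` with row blocks of equal size `m`,
as a matrix from `ℝ^d = Σᵢ ℝ^{dᵢ}` to `(ℝ^m)^n`. -/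
def blockDiagA {n m : ℕ} {d : Fin n → ℕ} (A : ∀ i, Matrix (Fin m) (Fin (d i)) ℝ) :
    Matrix (Fin n × Fin m) ((i : Fin n) × Fin (d i)) ℝ :=
  Matrix.of fun p q => if p.1 = q.1 then A q.1 p.2 q.2 else 0

/-- Horizontal concatenation `(A₁ ⋯ Aₙ)`. -/
def hcat {n m : ℕ} {d : Fin n → ℕ} (A : ∀ i, Matrix (Fin m) (Fin (d i)) ℝ) :
    Matrix (Fin m) ((i : Fin n) × Fin (d i)) ℝ :=
  Matrix.of fun r q => A q.1 r q.2

/-- Kronecker product `W ⊗ I_m`, acting on `(ℝ^m)^n`. -/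
def kronW (m : ℕ) {n : ℕ} (W : Matrix (Fin n) (Fin n) ℝ) :
    Matrix (Fin n × Fin m) (Fin n × Fin m) ℝ :=
  Matrix.of fun p q => W p.1 q.1 * (if p.2 = q.2 then 1 else 0)

/-- Kronecker product `I_n ⊗ C`. -/
def kronIdC (n : ℕ) {p d : ℕ} (C : Matrix (Fin p) (Fin d) ℝ) :
    Matrix (Fin n × Fin p) (Fin n × Fin d) ℝ :=
  Matrix.of fun pq q => (if pq.1 = q.1 then (1 : ℝ) else 0) * C pq.2 q.2

/-- The orthogonal projector of `(ℝ^m)^n` onto the consensus subspace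
`L_m = {(y₁,…,yₙ) : y₁ = ⋯ = yₙ}` (each block is replaced by the average). -/
def consensusProj (n m : ℕ) : Matrix (Fin n × Fin m) (Fin n × Fin m) ℝ :=
  Matrix.of fun p q => (if p.2 = q.2 then (1 : ℝ) else 0) / n

/-! ### Euclidean norms and extremal singular values -/

section VectorFacts

variable {ι κ τ : Type*} [Fintype ι] [Fintype κ] [Fintype τ]

lemma sqnorm_eq_dotProduct (v : ι → ℝ) : sqnorm v = v ⬝ᵥ v := by
  simp [sqnorm, dotProduct, sq]

lemma sqnorm_nonneg (v : ι → ℝ) : 0 ≤ sqnorm v :=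
  Finset.sum_nonneg fun _ _ => sq_nonneg _

lemma eq_zero_of_sqnorm_eq_zero {v : ι → ℝ} (h : sqnorm v = 0) : v = 0 := by
  rw [sqnorm_eq_dotProduct] at h
  exact dotProduct_self_eq_zero.mp h

lemma sqnorm_smul (c : ℝ) (v : ι → ℝ) : sqnorm (c • v) = c ^ 2 * sqnorm v := by
  simp [sqnorm, Finset.mul_sum, mul_pow]

lemma sqnorm_sumElim (a : ι → ℝ) (b : κ → ℝ) :
    sqnorm (Sum.elim a b) = sqnorm a + sqnorm b := by
  simp [sqnorm]

lemma dotProduct_sq_le (x y : ι → ℝ) : (x ⬝ᵥ y) ^ 2 ≤ sqnorm x * sqnorm y :=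
  Finset.sum_mul_sq_le_sq_mul_sq _ _ _

lemma half_sqnorm_sub_le (a b : ι → ℝ) : sqnorm a / 2 - sqnorm b ≤ sqnorm (a + b) := by
  simp only [sqnorm, Finset.sum_div, ← Finset.sum_sub_distrib]
  refine Finset.sum_le_sum fun i _ => ?_
  simp only [Pi.add_apply]
  nlinarith [sq_nonneg (a i + 2 * b i)]

/-- Weighted Young inequality in the form that gives `‖Ax + Dy‖² ≤ (a + b)(‖x‖² + ‖y‖²)`
whenever `‖A‖² ≤ a` and `‖D‖² ≤ b`. -/
lemma sqnorm_add_le_of_le {a b X Y : ℝ} (ha : 0 ≤ a) (hb : 0 ≤ b) (hX : 0 ≤ X) (hY : 0 ≤ Y)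
    (p q : ι → ℝ) (hp : sqnorm p ≤ a * X) (hq : sqnorm q ≤ b * Y) :
    sqnorm (p + q) ≤ (a + b) * (X + Y) := by
  have hexp : sqnorm (p + q) = sqnorm p + 2 * (p ⬝ᵥ q) + sqnorm q := by
    simp only [sqnorm_eq_dotProduct, add_dotProduct, dotProduct_add]
    rw [dotProduct_comm q p]; ring
  have hcs := dotProduct_sq_le p q
  have h1 : (p ⬝ᵥ q) ^ 2 ≤ (a * X) * (b * Y) :=
    hcs.trans (mul_le_mul hp hq (sqnorm_nonneg _) (by positivity))
  have h2 : 2 * (p ⬝ᵥ q) ≤ a * Y + b * X := by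
    apply le_of_sq_le_sq _ (by positivity)
    nlinarith [sq_nonneg (a * Y - b * X)]
  rw [hexp]; nlinarith

lemma exists_normalizing {x : ι → ℝ} (hx : sqnorm x ≠ 0) : ∃ c : ℝ, c ^ 2 * sqnorm x = 1 := by
  refine ⟨(Real.sqrt (sqnorm x))⁻¹, ?_⟩
  rw [inv_pow, Real.sq_sqrt (sqnorm_nonneg x), inv_mul_cancel₀ hx]

/-- Any matrix is bounded by its Frobenius norm; this makes the suprema defining the largest
singular value and the largest eigenvalue genuine. -/
lemma sqnorm_mulVec_le_frobenius (M : Matrix ι κ ℝ) (x : κ → ℝ) :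
    sqnorm (M *ᵥ x) ≤ (∑ i, sqnorm (M i)) * sqnorm x := by
  rw [Finset.sum_mul]
  exact Finset.sum_le_sum fun i _ => dotProduct_sq_le (M i) x

lemma sigmaMaxSq_nonneg (M : Matrix ι κ ℝ) : 0 ≤ sigmaMaxSq M := by
  refine Real.sSup_nonneg ?_
  rintro r ⟨x, -, rfl⟩
  exact sqnorm_nonneg _

lemma sqnorm_mulVec_le (M : Matrix ι κ ℝ) (x : κ → ℝ) :
    sqnorm (M *ᵥ x) ≤ sigmaMaxSq M * sqnorm x := by
  by_cases hx : sqnorm x = 0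
  · obtain rfl := eq_zero_of_sqnorm_eq_zero hx
    simp [sqnorm]
  obtain ⟨c, hc⟩ := exists_normalizing hx
  have hb : BddAbove {r : ℝ | ∃ x : κ → ℝ, sqnorm x = 1 ∧ r = sqnorm (M *ᵥ x)} := by
    refine ⟨∑ i, sqnorm (M i), ?_⟩
    rintro r ⟨y, hy, rfl⟩
    simpa [hy] using sqnorm_mulVec_le_frobenius M y
  have h := le_csSup hb ⟨c • x, by rw [sqnorm_smul, hc], rfl⟩
  rw [mulVec_smul, sqnorm_smul] at h
  have h0 := mul_le_mul_of_nonneg_right h (sqnorm_nonneg x)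
  calc sqnorm (M *ᵥ x) = c ^ 2 * sqnorm (M *ᵥ x) * sqnorm x := by
        linear_combination -sqnorm (M *ᵥ x) * hc
    _ ≤ _ := h0

lemma sigmaMaxSq_le {M : Matrix ι κ ℝ} {c : ℝ} (hc : 0 ≤ c)
    (h : ∀ x, sqnorm (M *ᵥ x) ≤ c * sqnorm x) : sigmaMaxSq M ≤ c := by
  refine Real.sSup_le ?_ hc
  rintro r ⟨x, hx, rfl⟩
  simpa [hx] using h x

lemma sigmaMinPosSq_nonneg (M : Matrix ι κ ℝ) : 0 ≤ sigmaMinPosSq M := by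
  refine Real.sInf_nonneg ?_
  rintro r ⟨x, -, -, rfl⟩
  exact sqnorm_nonneg _

lemma sigmaMinPosSq_mul_le (M : Matrix ι κ ℝ) (x : κ → ℝ)
    (hx : ∀ y, M *ᵥ y = 0 → x ⬝ᵥ y = 0) :
    sigmaMinPosSq M * sqnorm x ≤ sqnorm (M *ᵥ x) := by
  by_cases hx0 : sqnorm x = 0
  · rw [hx0, mul_zero]; exact sqnorm_nonneg _
  obtain ⟨c, hc⟩ := exists_normalizing hx0
  have hb : BddBelow {r : ℝ | ∃ x : κ → ℝ, (∀ y : κ → ℝ, M *ᵥ y = 0 → x ⬝ᵥ y = 0) ∧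
      sqnorm x = 1 ∧ r = sqnorm (M *ᵥ x)} := by
    refine ⟨0, ?_⟩
    rintro r ⟨y, -, -, rfl⟩
    exact sqnorm_nonneg _
  have h := csInf_le hb ⟨c • x, fun y hy => by rw [smul_dotProduct, hx y hy, smul_zero],
    by rw [sqnorm_smul, hc], rfl⟩
  rw [mulVec_smul, sqnorm_smul] at h
  have h0 := mul_le_mul_of_nonneg_right h (sqnorm_nonneg x)
  calc _ ≤ c ^ 2 * sqnorm (M *ᵥ x) * sqnorm x := h0
    _ = _ := by linear_combination sqnorm (M *ᵥ x) * hc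

/-- The alternative `sigmaMinPosSq M = 0` is the junk value of an infimum over the empty set,
which occurs when `M = 0`. -/
lemma sigmaMinPosSq_eq_zero_or_le {M : Matrix ι κ ℝ} {c : ℝ}
    (h : ∀ x, (∀ y, M *ᵥ y = 0 → x ⬝ᵥ y = 0) → c * sqnorm x ≤ sqnorm (M *ᵥ x)) :
    sigmaMinPosSq M = 0 ∨ c ≤ sigmaMinPosSq M := by
  unfold sigmaMinPosSq
  rcases Set.eq_empty_or_nonempty {r : ℝ | ∃ x : κ → ℝ,
    (∀ y : κ → ℝ, M *ᵥ y = 0 → x ⬝ᵥ y = 0) ∧ sqnorm x = 1 ∧ r = sqnorm (M *ᵥ x)} with he | hne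
  · left; rw [he, Real.sInf_empty]
  · right
    refine le_csInf hne ?_
    rintro r ⟨x, hx, hx1, rfl⟩
    simpa [hx1] using h x hx

lemma sqnorm_transpose_mulVec_le {M : Matrix ι κ ℝ} {c : ℝ} (hc : 0 ≤ c)
    (h : ∀ x, sqnorm (M *ᵥ x) ≤ c * sqnorm x) (u : ι → ℝ) :
    sqnorm (Mᵀ *ᵥ u) ≤ c * sqnorm u := by
  have h1 : sqnorm (Mᵀ *ᵥ u) = (M *ᵥ (Mᵀ *ᵥ u)) ⬝ᵥ u := by
    rw [sqnorm_eq_dotProduct, dotProduct_comm (M *ᵥ _) u, dotProduct_mulVec u M, ← mulVec_transpose]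
  have h2 := dotProduct_sq_le (M *ᵥ (Mᵀ *ᵥ u)) u
  rw [← h1] at h2
  have h3 := mul_le_mul_of_nonneg_right (h (Mᵀ *ᵥ u)) (sqnorm_nonneg u)
  rcases (sqnorm_nonneg (Mᵀ *ᵥ u)).eq_or_lt with h0 | h0
  · rw [← h0]; exact mul_nonneg hc (sqnorm_nonneg u)
  · nlinarith

/-- A vector orthogonal to `ker N` lies in the row space of `N`. -/
lemma exists_eq_transpose_mulVec (N : Matrix ι κ ℝ) (x : κ → ℝ)
    (hx : ∀ y, N *ᵥ y = 0 → x ⬝ᵥ y = 0) : ∃ w, x = Nᵀ *ᵥ w := by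
  classical
  have h := LinearMap.orthogonal_ker (Matrix.toEuclideanLin N)
  have hm : WithLp.toLp 2 x ∈ (LinearMap.ker (Matrix.toEuclideanLin N))ᗮ := by
    rw [Submodule.mem_orthogonal]
    intro y hy
    have := hx (WithLp.ofLp y) (by
      have := congrArg WithLp.ofLp (LinearMap.mem_ker.mp hy)
      simpa using this)
    simpa [EuclideanSpace.inner_eq_star_dotProduct] using this
  rw [h] at hm
  obtain ⟨w, hw⟩ := hm
  refine ⟨WithLp.ofLp w, ?_⟩
  rw [← Matrix.toEuclideanLin_conjTranspose_eq_adjoint] at hw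
  have := congrArg WithLp.ofLp hw
  simpa using this.symm

/-- `M` and `Mᵀ` have the same positive singular values: a lower bound for `Mᵀ` off its kernel
is one for `M`. A vector `x ⟂ ker M = ker MᵀM` has the form `x = Mᵀ(Mw)`, where `Mw ⟂ ker Mᵀ`,
and Cauchy–Schwarz applied to `‖x‖² = ⟨Mx, Mw⟩` does the rest. -/
lemma lower_bound_of_transpose {M : Matrix ι κ ℝ} {c : ℝ} (hc : 0 < c)
    (h : ∀ u, (∀ y, Mᵀ *ᵥ y = 0 → u ⬝ᵥ y = 0) → c * sqnorm u ≤ sqnorm (Mᵀ *ᵥ u))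
    (x : κ → ℝ) (hx : ∀ y, M *ᵥ y = 0 → x ⬝ᵥ y = 0) :
    c * sqnorm x ≤ sqnorm (M *ᵥ x) := by
  obtain ⟨w, hw⟩ := exists_eq_transpose_mulVec (Mᵀ * M) x (fun y hy => hx y (by
    apply eq_zero_of_sqnorm_eq_zero
    rw [sqnorm_eq_dotProduct, dotProduct_mulVec, ← mulVec_transpose, mulVec_mulVec, hy,
      zero_dotProduct]))
  rw [transpose_mul, transpose_transpose, ← mulVec_mulVec] at hw
  have h1 := h (M *ᵥ w) (fun y hy => by
    rw [dotProduct_comm, dotProduct_mulVec, ← mulVec_transpose, hy, zero_dotProduct])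
  rw [← hw] at h1
  have h2 : sqnorm x = (M *ᵥ x) ⬝ᵥ (M *ᵥ w) := by
    rw [dotProduct_comm, sqnorm_eq_dotProduct]
    conv_lhs => lhs; rw [hw]
    rw [mulVec_transpose, ← dotProduct_mulVec]
  have h3 := dotProduct_sq_le (M *ᵥ x) (M *ᵥ w)
  rw [← h2] at h3
  rcases (sqnorm_nonneg x).eq_or_lt with h0 | h0
  · rw [← h0, mul_zero]; exact sqnorm_nonneg _
  · have h4 := mul_le_mul_of_nonneg_left h1 (sqnorm_nonneg (M *ᵥ x))
    have h5 := mul_le_mul_of_nonneg_left h3 hc.le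
    nlinarith

end VectorFacts

/-! ### Extremal eigenvalues of a positive semidefinite matrix -/

section Gossip

variable {ι : Type*} [Fintype ι]

lemma rayleigh_le_lamMax (W : Matrix ι ι ℝ) (x : ι → ℝ) :
    x ⬝ᵥ W *ᵥ x ≤ lamMax W * sqnorm x := by
  by_cases hx : sqnorm x = 0
  · obtain rfl := eq_zero_of_sqnorm_eq_zero hx
    simp [sqnorm]
  obtain ⟨c, hc⟩ := exists_normalizing hx
  have hb : BddAbove {r : ℝ | ∃ x : ι → ℝ, sqnorm x = 1 ∧ r = x ⬝ᵥ W *ᵥ x} := by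
    refine ⟨∑ i, sqnorm (W i) + 1, ?_⟩
    rintro r ⟨y, hy, rfl⟩
    have h1 := dotProduct_sq_le y (W *ᵥ y)
    have h2 := sqnorm_mulVec_le_frobenius W y
    rw [hy] at h1 h2
    nlinarith [sq_nonneg (y ⬝ᵥ W *ᵥ y - 1)]
  have h := le_csSup hb ⟨c • x, by rw [sqnorm_smul, hc], rfl⟩
  rw [mulVec_smul, smul_dotProduct, dotProduct_smul, smul_eq_mul, smul_eq_mul] at h
  have h0 := mul_le_mul_of_nonneg_right h (sqnorm_nonneg x)
  calc x ⬝ᵥ W *ᵥ x = c * (c * (x ⬝ᵥ W *ᵥ x)) * sqnorm x := by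
        linear_combination -(x ⬝ᵥ W *ᵥ x) * hc
    _ ≤ _ := h0

lemma lamMinPos_mul_le (W : Matrix ι ι ℝ) (hW : ∀ x, 0 ≤ x ⬝ᵥ W *ᵥ x) (x : ι → ℝ)
    (hx : ∀ y, W *ᵥ y = 0 → x ⬝ᵥ y = 0) : lamMinPos W * sqnorm x ≤ x ⬝ᵥ W *ᵥ x := by
  by_cases hx0 : sqnorm x = 0
  · rw [hx0, mul_zero]; exact hW x
  obtain ⟨c, hc⟩ := exists_normalizing hx0
  have hb : BddBelow {r : ℝ | ∃ x : ι → ℝ, (∀ y : ι → ℝ, W *ᵥ y = 0 → x ⬝ᵥ y = 0) ∧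
      sqnorm x = 1 ∧ r = x ⬝ᵥ W *ᵥ x} := by
    refine ⟨0, ?_⟩
    rintro r ⟨y, -, -, rfl⟩
    exact hW y
  have h := csInf_le hb ⟨c • x, fun y hy => by rw [smul_dotProduct, hx y hy, smul_zero],
    by rw [sqnorm_smul, hc], rfl⟩
  rw [mulVec_smul, smul_dotProduct, dotProduct_smul, smul_eq_mul, smul_eq_mul] at h
  have h0 := mul_le_mul_of_nonneg_right h (sqnorm_nonneg x)
  calc _ ≤ c * (c * (x ⬝ᵥ W *ᵥ x)) * sqnorm x := h0
    _ = _ := by linear_combination (x ⬝ᵥ W *ᵥ x) * hc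

lemma lamMax_nonneg (W : Matrix ι ι ℝ) (hW : ∀ x, 0 ≤ x ⬝ᵥ W *ᵥ x) : 0 ≤ lamMax W := by
  refine Real.sSup_nonneg ?_
  rintro r ⟨x, -, rfl⟩
  exact hW x

lemma lamMinPos_nonneg (W : Matrix ι ι ℝ) (hW : ∀ x, 0 ≤ x ⬝ᵥ W *ᵥ x) : 0 ≤ lamMinPos W := by
  refine Real.sInf_nonneg ?_
  rintro r ⟨x, -, -, rfl⟩
  exact hW x

lemma lamMinPos_sq_mul_le (W : Matrix ι ι ℝ) (hW : ∀ x, 0 ≤ x ⬝ᵥ W *ᵥ x) (x : ι → ℝ)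
    (hx : ∀ y, W *ᵥ y = 0 → x ⬝ᵥ y = 0) :
    lamMinPos W ^ 2 * sqnorm x ≤ sqnorm (W *ᵥ x) := by
  have h1 := lamMinPos_mul_le W hW x hx
  have h2 := dotProduct_sq_le x (W *ᵥ x)
  have h0 := lamMinPos_nonneg W hW
  have h3 := pow_le_pow_left₀ (mul_nonneg h0 (sqnorm_nonneg x)) h1 2
  rcases (sqnorm_nonneg x).eq_or_lt with hx0 | hx0
  · rw [← hx0, mul_zero]; exact sqnorm_nonneg _
  · nlinarith

/-- For a positive semidefinite `W` the Rayleigh quotient controls the operator norm. With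
`L = lamMax W` and `y = Wx`, expand `0 ≤ ⟨y - tx, W(y - tx)⟩` at `t = L`, or at `t = 1` if
`L = 0`. -/
lemma sqnorm_mulVec_le_lamMax (W : Matrix ι ι ℝ) (hs : Wᵀ = W)
    (hW : ∀ x, 0 ≤ x ⬝ᵥ W *ᵥ x) (x : ι → ℝ) :
    sqnorm (W *ᵥ x) ≤ lamMax W ^ 2 * sqnorm x := by
  set L := lamMax W with hL
  have hL0 : 0 ≤ L := lamMax_nonneg W hW
  have key : ∀ t : ℝ, 0 ≤ (W *ᵥ x) ⬝ᵥ W *ᵥ (W *ᵥ x) - 2 * t * sqnorm (W *ᵥ x)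
      + t ^ 2 * (x ⬝ᵥ W *ᵥ x) := by
    intro t
    have h := hW (W *ᵥ x - t • x)
    have e : x ⬝ᵥ W *ᵥ (W *ᵥ x) = sqnorm (W *ᵥ x) := by
      rw [dotProduct_mulVec, ← mulVec_transpose, hs, sqnorm_eq_dotProduct]
    rw [mulVec_sub, mulVec_smul, sub_dotProduct, dotProduct_sub, dotProduct_sub, smul_dotProduct,
      smul_dotProduct, dotProduct_smul, dotProduct_smul, e, ← sqnorm_eq_dotProduct] at h
    simp only [smul_eq_mul] at h
    linarith
  have h1 := rayleigh_le_lamMax W (W *ᵥ x)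
  have h2 := rayleigh_le_lamMax W x
  rw [← hL] at h1 h2
  rcases hL0.eq_or_lt with h0 | h0
  · have := key 1
    rw [← h0] at h1 h2 ⊢
    linarith
  · have h3 := key L
    have h4 : L * sqnorm (W *ᵥ x) ≤ L * (L * (x ⬝ᵥ W *ᵥ x)) := by linarith
    have h5 := le_of_mul_le_mul_left h4 h0
    nlinarith

end Gossip

/-! ### Block-diagonal and Kronecker matrices -/

section BlockStructure

variable {n m : ℕ} {d : Fin n → ℕ} (A : ∀ i, Matrix (Fin m) (Fin (d i)) ℝ)

lemma sqnorm_prod (u : Fin n × Fin m → ℝ) :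
    sqnorm u = ∑ r, sqnorm fun i => u (i, r) := by
  simp only [sqnorm, Fintype.sum_prod_type]
  exact Finset.sum_comm

lemma blockDiagA_mulVec (x : ((i : Fin n) × Fin (d i)) → ℝ) (i : Fin n) (r : Fin m) :
    (blockDiagA A *ᵥ x) (i, r) = (A i *ᵥ fun k => x ⟨i, k⟩) r := by
  simp only [mulVec, dotProduct, blockDiagA, of_apply, Fintype.sum_sigma, ite_mul, zero_mul]
  rw [Finset.sum_eq_single i]
  · simp
  · intro j _ hj
    simp [Ne.symm hj]
  · simp

lemma sqnorm_blockDiagA_mulVec_le {L : ℝ} (hL : ∀ i, sigmaMaxSq (A i) ≤ L)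
    (x : ((i : Fin n) × Fin (d i)) → ℝ) : sqnorm (blockDiagA A *ᵥ x) ≤ L * sqnorm x := by
  have h : ∀ i, sqnorm (A i *ᵥ fun k => x ⟨i, k⟩) ≤ L * sqnorm fun k => x ⟨i, k⟩ := fun i =>
    (sqnorm_mulVec_le _ _).trans (mul_le_mul_of_nonneg_right (hL i) (sqnorm_nonneg _))
  have e1 : sqnorm (blockDiagA A *ᵥ x) = ∑ i, sqnorm (A i *ᵥ fun k => x ⟨i, k⟩) := by
    simp only [sqnorm, Fintype.sum_prod_type, blockDiagA_mulVec]
  have e2 : sqnorm x = ∑ i, sqnorm fun k => x ⟨i, k⟩ := by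
    simp only [sqnorm, Fintype.sum_sigma]
  rw [e1, e2, Finset.mul_sum]
  exact Finset.sum_le_sum fun i _ => h i

/-- On a consensus vector `𝐀ᵀ` acts as `𝐀'ᵀ`. -/
lemma blockDiagA_transpose_mulVec_consensus (c : ℝ) (s : Fin m → ℝ) :
    (blockDiagA A)ᵀ *ᵥ (fun q => c * s q.2) = (c • hcat A)ᵀ *ᵥ s := by
  ext ⟨i, k⟩
  simp only [mulVec, dotProduct, blockDiagA, hcat, of_apply, transpose_apply, Matrix.smul_apply,
    smul_eq_mul, Fintype.sum_prod_type, ite_mul, zero_mul]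
  rw [Finset.sum_eq_single i]
  · simp only [if_true]
    exact Finset.sum_congr rfl fun r _ => by ring
  · intro j _ hj
    simp [hj]
  · simp

lemma kronW_mulVec (W : Matrix (Fin n) (Fin n) ℝ) (u : Fin n × Fin m → ℝ) (i : Fin n)
    (r : Fin m) : (kronW m W *ᵥ u) (i, r) = (W *ᵥ fun j => u (j, r)) i := by
  simp [mulVec, dotProduct, kronW, Fintype.sum_prod_type]

lemma kronW_transpose (W : Matrix (Fin n) (Fin n) ℝ) (hs : Wᵀ = W) :
    (kronW m W)ᵀ = kronW m W := by
  ext p q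
  have : W q.1 p.1 = W p.1 q.1 := by conv_rhs => rw [← hs, transpose_apply]
  simp only [kronW, transpose_apply, of_apply, this, eq_comm]

lemma sqnorm_kronW_mulVec (W : Matrix (Fin n) (Fin n) ℝ) (u : Fin n × Fin m → ℝ) :
    sqnorm (kronW m W *ᵥ u) = ∑ r, sqnorm (W *ᵥ fun i => u (i, r)) := by
  rw [sqnorm_prod]
  simp only [kronW_mulVec]

lemma sqnorm_kronW_mulVec_le (W : Matrix (Fin n) (Fin n) ℝ) {L : ℝ}
    (h : ∀ x, sqnorm (W *ᵥ x) ≤ L * sqnorm x) (u : Fin n × Fin m → ℝ) :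
    sqnorm (kronW m W *ᵥ u) ≤ L * sqnorm u := by
  rw [sqnorm_kronW_mulVec, sqnorm_prod, Finset.mul_sum]
  exact Finset.sum_le_sum fun r _ => h _

end BlockStructure

/-! ### Lower bounds on the smallest positive singular value -/

section LowerBounds

/-- Stacking `S` on top of `βD` with `β` large enough keeps half of the smallest positive squared
singular value of `S` restricted to `ker D`. Splitting `x = Px + (x - Px)`, the rows `βD` control
the second part, with a surplus that absorbs its image under `S`. -/
lemma stacked_lower_bound {ι κ τ : Type*} [Fintype ι] [Fintype κ] [Fintype τ]
    {S : Matrix τ κ ℝ} {D : Matrix ι κ ℝ} {P : Matrix κ κ ℝ}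
    (hP_symm : Pᵀ = P) (hP_ker : ∀ x, D *ᵥ (P *ᵥ x) = 0) (hP_fix : ∀ x, D *ᵥ x = 0 → P *ᵥ x = x)
    {t L c β : ℝ}
    (hS : ∀ x, sqnorm (S *ᵥ x) ≤ L * sqnorm x)
    (hSP : ∀ x, (∀ y, (S * P) *ᵥ y = 0 → x ⬝ᵥ y = 0) → t * sqnorm x ≤ sqnorm ((S * P) *ᵥ x))
    (hD : ∀ x, (∀ y, D *ᵥ y = 0 → x ⬝ᵥ y = 0) → c * sqnorm x ≤ sqnorm (D *ᵥ x))
    (hβ : β ^ 2 * c = L + t / 2) (x : κ → ℝ)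
    (hx : ∀ y, fromRows S (β • D) *ᵥ y = 0 → x ⬝ᵥ y = 0) :
    t / 2 * sqnorm x ≤ sqnorm (fromRows S (β • D) *ᵥ x) := by
  have hadj : ∀ y z, (P *ᵥ y) ⬝ᵥ z = y ⬝ᵥ (P *ᵥ z) := fun y z => by
    rw [dotProduct_mulVec, ← mulVec_transpose, hP_symm]
  have hidem : P *ᵥ (P *ᵥ x) = P *ᵥ x := hP_fix _ (hP_ker x)
  set a := P *ᵥ x with ha
  have hDa : D *ᵥ a = 0 := hP_ker x
  have hsplit : sqnorm x = sqnorm a + sqnorm (x - a) := by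
    have h1 : a ⬝ᵥ a = x ⬝ᵥ a := by
      conv_lhs => lhs; rw [ha]
      rw [hadj, hidem]
    simp only [sqnorm_eq_dotProduct, sub_dotProduct, dotProduct_sub]
    rw [dotProduct_comm a x, h1]; ring
  have hb := hD (x - a) (fun y hy => by
    rw [sub_dotProduct, ha, hadj, hP_fix y hy, sub_self])
  have hSa := hSP a (fun y hy => by
    rw [ha, hadj]
    apply hx
    rw [fromRows_mulVec, mulVec_mulVec, hy, smul_mulVec, hP_ker, smul_zero]
    ext (_ | _) <;> rfl)
  rw [← mulVec_mulVec, hidem] at hSa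
  have hSx : S *ᵥ x = S *ᵥ a + S *ᵥ (x - a) := by rw [← mulVec_add, add_sub_cancel]
  have hDx : D *ᵥ x = D *ᵥ (x - a) := by rw [mulVec_sub, hDa, sub_zero]
  have h1 := half_sqnorm_sub_le (S *ᵥ a) (S *ᵥ (x - a))
  have h2 := hS (x - a)
  rw [fromRows_mulVec, sqnorm_sumElim, smul_mulVec, sqnorm_smul, hDx, hSx, hsplit]
  have h3 := mul_le_mul_of_nonneg_left hb (sq_nonneg β)
  rw [← mul_assoc, hβ] at h3
  nlinarith

/-- The dual block operator `Bᵀ(u, v) = (𝐀ᵀu + Dᵀv, α𝐖u)` is bounded below off its kernel, given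
such a bound for the stacked operator `(s, v) ↦ 𝐀'ᵀs/√n + Dᵀv` (with `c = 1/√n`). The component
of `u` orthogonal to consensus is controlled by `α𝐖`, and the consensus component is
`c • (s, …, s)` with `s = c ∑ᵢ uᵢ`. -/
lemma coupled_transpose_lower_bound {n m : ℕ} {d : Fin n → ℕ} {ι : Type*} [Fintype ι]
    (A : ∀ i, Matrix (Fin m) (Fin (d i)) ℝ) (D : Matrix ι ((i : Fin n) × Fin (d i)) ℝ)
    (W : Matrix (Fin n) (Fin n) ℝ) (hWs : Wᵀ = W)
    (hWk : ∀ x : Fin n → ℝ, W *ᵥ x = 0 ↔ ∀ i j, x i = x j)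
    {c t L w α : ℝ} (hc : c ^ 2 * n = 1)
    (hA : ∀ u, sqnorm ((blockDiagA A)ᵀ *ᵥ u) ≤ L * sqnorm u)
    (hW : ∀ x, (∀ y, W *ᵥ y = 0 → x ⬝ᵥ y = 0) → w * sqnorm x ≤ sqnorm (W *ᵥ x))
    (hα : α ^ 2 * w = L + t / 4)
    (hS : ∀ z, (∀ y, (fromRows (c • hcat A) D)ᵀ *ᵥ y = 0 → z ⬝ᵥ y = 0) →
      t / 2 * sqnorm z ≤ sqnorm ((fromRows (c • hcat A) D)ᵀ *ᵥ z))
    (z : (Fin n × Fin m) ⊕ ι → ℝ)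
    (hz : ∀ y, (fromBlocks (blockDiagA A) (α • kronW m W) D 0)ᵀ *ᵥ y = 0 → z ⬝ᵥ y = 0) :
    t / 4 * sqnorm z ≤ sqnorm ((fromBlocks (blockDiagA A) (α • kronW m W) D 0)ᵀ *ᵥ z) := by
  have hB : ∀ (u : Fin n × Fin m → ℝ) (v : ι → ℝ),
      (fromBlocks (blockDiagA A) (α • kronW m W) D 0)ᵀ *ᵥ Sum.elim u v =
        Sum.elim ((blockDiagA A)ᵀ *ᵥ u + Dᵀ *ᵥ v) (α • kronW m W *ᵥ u) := by
    intro u v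
    rw [fromBlocks_transpose, fromBlocks_mulVec, transpose_smul, kronW_transpose W hWs]
    simp [smul_mulVec, Sum.elim_comp_inl, Sum.elim_comp_inr]
  have hR : ∀ (s : Fin m → ℝ) (v : ι → ℝ),
      (fromRows (c • hcat A) D)ᵀ *ᵥ Sum.elim s v = (c • hcat A)ᵀ *ᵥ s + Dᵀ *ᵥ v := by
    intro s v
    rw [transpose_fromRows, fromCols_mulVec, Sum.elim_comp_inl, Sum.elim_comp_inr]
  obtain ⟨u, v, rfl⟩ : ∃ u v, z = Sum.elim u v :=
    ⟨fun i => z (Sum.inl i), fun k => z (Sum.inr k), by ext (_ | _) <;> rfl⟩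
  set s : Fin m → ℝ := fun r => c * ∑ i, u (i, r) with hs
  set ū : Fin n × Fin m → ℝ := fun q => c * s q.2 with hū
  have hdot : ∀ s' : Fin m → ℝ, u ⬝ᵥ (fun q => c * s' q.2) = s ⬝ᵥ s' := by
    intro s'
    simp only [dotProduct, Fintype.sum_prod_type, hs]
    rw [Finset.sum_comm]
    refine Finset.sum_congr rfl fun r _ => ?_
    rw [← Finset.sum_mul]; ring
  have hWcons : ∀ s' : Fin m → ℝ, kronW m W *ᵥ (fun q => c * s' q.2) = 0 := by
    intro s'
    ext ⟨i, r⟩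
    rw [kronW_mulVec]
    exact congrFun ((hWk _).mpr fun _ _ => rfl) i
  have hūū : sqnorm ū = sqnorm s := by
    simp only [sqnorm, Fintype.sum_prod_type, hū, Finset.sum_const, Finset.card_univ,
      Fintype.card_fin, nsmul_eq_mul, mul_pow, ← Finset.mul_sum]
    rw [← mul_assoc, hc, one_mul]
  have hnorm : sqnorm u = sqnorm s + sqnorm (u - ū) := by
    have h1 : sqnorm (u - ū) = sqnorm u - 2 * (u ⬝ᵥ ū) + sqnorm ū := by
      simp only [sqnorm_eq_dotProduct, sub_dotProduct, dotProduct_sub]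
      rw [dotProduct_comm ū u]; ring
    rw [h1, hūū, hū, hdot, sqnorm_eq_dotProduct s]; ring
  have hperp : w * sqnorm (u - ū) ≤ sqnorm (kronW m W *ᵥ (u - ū)) := by
    rw [sqnorm_kronW_mulVec, sqnorm_prod, Finset.mul_sum]
    refine Finset.sum_le_sum fun r _ => hW _ fun y hy => ?_
    have hy' := (hWk y).mp hy
    rcases isEmpty_or_nonempty (Fin n) with _ | ⟨⟨i0⟩⟩
    · simp [dotProduct]
    -- Column sums of `u - ū` vanish because `c² n = 1`.
    · have h0 : ∑ i, (u - ū) (i, r) = 0 := by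
        simp only [Pi.sub_apply, hū, hs, Finset.sum_sub_distrib, Finset.sum_const,
          Finset.card_univ, Fintype.card_fin, nsmul_eq_mul]
        linear_combination -(∑ i, u (i, r)) * hc
      calc _ = ∑ i, (u - ū) (i, r) * y i0 :=
            Finset.sum_congr rfl fun i _ => by rw [hy' i i0]
        _ = 0 := by rw [← Finset.sum_mul, h0, zero_mul]
  have hWu : kronW m W *ᵥ u = kronW m W *ᵥ (u - ū) := by
    rw [mulVec_sub, hū, hWcons, sub_zero]
  have hcons := hS (Sum.elim s v) (fun y hy => by
    obtain ⟨s', v', rfl⟩ : ∃ s' v', y = Sum.elim s' v' :=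
      ⟨fun i => y (Sum.inl i), fun k => y (Sum.inr k), by ext (_ | _) <;> rfl⟩
    rw [hR] at hy
    have h := hz (Sum.elim (fun q => c * s' q.2) v') (by
      rw [hB, blockDiagA_transpose_mulVec_consensus, hy, hWcons, smul_zero]
      ext (_ | _) <;> rfl)
    rw [sumElim_dotProduct_sumElim, hdot] at h
    rw [sumElim_dotProduct_sumElim, h])
  rw [hR, ← blockDiagA_transpose_mulVec_consensus, sqnorm_sumElim] at hcons
  have hsum : (blockDiagA A)ᵀ *ᵥ u + Dᵀ *ᵥ v =
      ((blockDiagA A)ᵀ *ᵥ ū + Dᵀ *ᵥ v) + (blockDiagA A)ᵀ *ᵥ (u - ū) := by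
    rw [mulVec_sub]; abel
  have h1 := half_sqnorm_sub_le ((blockDiagA A)ᵀ *ᵥ ū + Dᵀ *ᵥ v) ((blockDiagA A)ᵀ *ᵥ (u - ū))
  have h2 := hA (u - ū)
  have h3 := mul_le_mul_of_nonneg_left hperp (sq_nonneg α)
  rw [← mul_assoc, hα] at h3
  rw [hB, sqnorm_sumElim, sqnorm_sumElim, hnorm, sqnorm_smul, hWu, hsum]
  linarith

end LowerBounds

/-! ### Condition number of the block matrix -/

/-- condition number bound for the block matrix
`B = [[𝐀, α𝐖], [β𝐂, 0]]` of coupled and local constraints, when `μ̃ > 0`. -/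
theorem coupled_local_cond_bound {n m : ℕ} (d p : Fin n → ℕ)
    (A : ∀ i : Fin n, Matrix (Fin m) (Fin (d i)) ℝ)
    (C : ∀ i : Fin n, Matrix (Fin (p i)) (Fin (d i)) ℝ)
    -- W is a gossip matrix
    (W : Matrix (Fin n) (Fin n) ℝ)
    (hW_symm : Wᵀ = W)
    (hW_psd : ∀ x : Fin n → ℝ, 0 ≤ x ⬝ᵥ W.mulVec x)
    (hW_ker : ∀ x : Fin n → ℝ, W.mulVec x = 0 ↔ ∀ i j, x i = x j)
    -- P is the orthogonal projector onto ker 𝐂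
    (P : Matrix ((i : Fin n) × Fin (d i)) ((i : Fin n) × Fin (d i)) ℝ)
    (hP_symm : Pᵀ = P)
    (hP_ker : ∀ x, (Matrix.blockDiagonal' C).mulVec (P.mulVec x) = 0)
    (hP_fix : ∀ x, (Matrix.blockDiagonal' C).mulVec x = 0 → P.mulVec x = x)
    (tμ : ℝ) (htμ : tμ = 1 / (n : ℝ) * sigmaMinPosSq (hcat A * P)) (htμ_pos : 0 < tμ)
    (LA : ℝ) (hLA : LA = ⨆ i, sigmaMaxSq (A i))
    (LS : ℝ) (hLS : LS = 1 / (n : ℝ) * sigmaMaxSq (hcat A))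
    (μW LW : ℝ) (hμW : μW = lamMinPos W ^ 2) (hLW : LW = lamMax W ^ 2) (hμW_pos : 0 < μW)
    (μC LC : ℝ) (hμC : μC = sigmaMinPosSq (Matrix.blockDiagonal' C))
    (hLC : LC = sigmaMaxSq (Matrix.blockDiagonal' C)) (hμC_pos : 0 < μC)
    (κW κC : ℝ) (hκW : κW = LW / μW) (hκC : κC = LC / μC)
    (α β : ℝ) (hα : α ^ 2 = (LA + tμ / 4) / μW) (hβ : β ^ 2 = (LS + tμ / 2) / μC)
    (B : Matrix ((Fin n × Fin m) ⊕ ((i : Fin n) × Fin (p i)))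
      (((i : Fin n) × Fin (d i)) ⊕ (Fin n × Fin m)) ℝ)
    (hB : B = Matrix.fromBlocks (blockDiagA A) (α • kronW m W)
      (β • Matrix.blockDiagonal' C) 0) :
    sigmaMaxSq B / sigmaMinPosSq B ≤
      4 * LA / tμ + (4 * LA + tμ) / tμ * κW + (4 * LS + 2 * tμ) / tμ * κC := by
  have hn : (0 : ℝ) < n := by
    rcases Nat.eq_zero_or_pos n with rfl | h
    · simp at htμ; linarith
    · exact_mod_cast h
  obtain ⟨c, hc⟩ : ∃ c : ℝ, c ^ 2 = 1 / n :=
    ⟨Real.sqrt (1 / n), Real.sq_sqrt (by positivity)⟩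
  have hcn : c ^ 2 * n = 1 := by rw [hc]; field_simp
  have hLAi : ∀ i, sigmaMaxSq (A i) ≤ LA := fun i => by
    rw [hLA]; exact le_ciSup (f := fun i => sigmaMaxSq (A i)) (Set.finite_range _).bddAbove i
  have hLA0 : 0 ≤ LA := by rw [hLA]; exact Real.iSup_nonneg fun i => sigmaMaxSq_nonneg _
  have hLS0 : 0 ≤ LS := by
    rw [hLS]; exact mul_nonneg (by positivity) (sigmaMaxSq_nonneg _)
  have hLW0 : 0 ≤ LW := by rw [hLW]; positivity
  have hLC0 : 0 ≤ LC := by rw [hLC]; exact sigmaMaxSq_nonneg _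
  have hA := sqnorm_blockDiagA_mulVec_le A hLAi
  have hα' : α ^ 2 * μW = LA + tμ / 4 := by rw [hα]; field_simp
  have hβ' : β ^ 2 * μC = LS + tμ / 2 := by rw [hβ]; field_simp
  -- Scaling `𝐀'` by `c = 1/√n` turns `L_S` and `μ̃` into its squared singular values.
  have hstack := stacked_lower_bound (S := c • hcat A) (L := LS) (t := tμ) (c := μC) (β := β)
    hP_symm hP_ker hP_fix
    (fun x => by
      rw [smul_mulVec, sqnorm_smul, hc, hLS, mul_assoc]
      exact mul_le_mul_of_nonneg_left (sqnorm_mulVec_le _ _) (by positivity))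
    (fun x hx => by
      rw [Matrix.smul_mul, smul_mulVec, sqnorm_smul, hc, htμ, mul_assoc]
      refine mul_le_mul_of_nonneg_left (sigmaMinPosSq_mul_le _ _ fun y hy => hx y ?_)
        (by positivity)
      rw [Matrix.smul_mul, smul_mulVec, hy, smul_zero])
    (fun x hx => by rw [hμC]; exact sigmaMinPosSq_mul_le _ _ hx) hβ'
  have hstackT := lower_bound_of_transpose (c := tμ / 2)
    (M := (fromRows (c • hcat A) (β • Matrix.blockDiagonal' C))ᵀ) (by positivity)
    (by simpa only [transpose_transpose] using hstack)
  have hlow : ∀ x, (∀ y, B *ᵥ y = 0 → x ⬝ᵥ y = 0) → tμ / 4 * sqnorm x ≤ sqnorm (B *ᵥ x) := by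
    refine lower_bound_of_transpose (by positivity) ?_
    rw [hB]
    exact coupled_transpose_lower_bound A _ W hW_symm hW_ker hcn
      (sqnorm_transpose_mulVec_le hLA0 hA)
      (fun x hx => by rw [hμW]; exact lamMinPos_sq_mul_le W hW_psd x hx) hα' hstackT
  have hWle : ∀ y, sqnorm ((α • kronW m W) *ᵥ y) ≤ α ^ 2 * LW * sqnorm y := fun y => by
    rw [smul_mulVec, sqnorm_smul, mul_assoc, hLW]
    exact mul_le_mul_of_nonneg_left
      (sqnorm_kronW_mulVec_le W (sqnorm_mulVec_le_lamMax W hW_symm hW_psd) y) (sq_nonneg _)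
  have hup : sigmaMaxSq B ≤ LA + α ^ 2 * LW + β ^ 2 * LC := by
    refine sigmaMaxSq_le (by positivity) fun z => ?_
    obtain ⟨x, y, rfl⟩ : ∃ x y, z = Sum.elim x y :=
      ⟨fun i => z (Sum.inl i), fun k => z (Sum.inr k), by ext (_ | _) <;> rfl⟩
    rw [hB, fromBlocks_mulVec, Sum.elim_comp_inl, Sum.elim_comp_inr, zero_mulVec, add_zero,
      sqnorm_sumElim, sqnorm_sumElim, smul_mulVec β, sqnorm_smul]
    have h1 := sqnorm_add_le_of_le hLA0 (by positivity) (sqnorm_nonneg x) (sqnorm_nonneg y)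
      _ _ (hA x) (hWle y)
    have h2 := mul_le_mul_of_nonneg_left (sqnorm_mulVec_le (Matrix.blockDiagonal' C) x)
      (sq_nonneg β)
    rw [← hLC] at h2
    have h3 : 0 ≤ β ^ 2 * LC * sqnorm y := mul_nonneg (by positivity) (sqnorm_nonneg y)
    linarith
  have hrhs : 4 * LA / tμ + (4 * LA + tμ) / tμ * κW + (4 * LS + 2 * tμ) / tμ * κC =
      (LA + α ^ 2 * LW + β ^ 2 * LC) / (tμ / 4) := by
    rw [hα, hβ, hκW, hκC]; field_simp; ring
  rw [hrhs]
  rcases sigmaMinPosSq_eq_zero_or_le hlow with h0 | h0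
  · rw [h0, div_zero]; positivity
  · exact div_le_div₀ (by positivity) hup (by positivity) h0
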